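/- arXiv:2505.17523 — 2 statements merged into one kernel-verified Lean document; each statement's English description precedes it below -/
import Mathlib

section
/- For every T ⊆ 𝔹, the kernel of the linear map i_T : ℚ^𝔹 → ℚ^{𝔹−T} equals the ℚ-linear span of {b_β : β ∈ T}; in particular the family {b_β : β ∈ T} is linearly independent, and ker i_T coincides with the ℚ^{≥0}-cone generated by {b_β, −b_β : β ∈ T}. -/
/- Setting: `B` is the finite nonempty set 𝔹 equipped with a permutation `σ` (Frobenius),
and `p` is a prime.  Weights live in `ℚ^𝔹 = (B → ℚ)`.  The orbits `𝔹_𝔭` of `σ` are the sets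
`orbit σ β`, and for `T ⊆ 𝔹` we have `T_𝔭 = T ∩ orbit σ β`. -/

open scoped Classical

noncomputable section

namespace GO

variable {B : Type*} [Fintype B] [DecidableEq B]

/-- The standard basis vector `e_β` of `ℚ^𝔹`. -/
def e (β : B) : B → ℚ := fun τ => if τ = β then 1 else 0

/-- `β'` lies in the `σ`-orbit of `β`. -/
def sameOrbit (σ : Equiv.Perm B) (β β' : B) : Prop := ∃ n : ℕ, (σ ^ n) β = β'

/-- The `σ`-orbit `𝔹_𝔭` of `β`. -/
def orbit (σ : Equiv.Perm B) (β : B) : Set B := {τ | sameOrbit σ β τ}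

/-- `|𝔹_𝔭|`, the cardinality of the orbit of `β`. -/
def orbitCard (σ : Equiv.Perm B) (β : B) : ℕ := (orbit σ β).ncard

/-- For `β`, `β'` in the same orbit: the unique `n` with `0 < n ≤ |𝔹_𝔭|` and `σ^n β' = β`,
realized as the least positive `n` with `σ^n β' = β`. -/
def steps (σ : Equiv.Perm B) (β' β : B) : ℕ := sInf {n : ℕ | 0 < n ∧ (σ ^ n) β' = β}

/-- For `β`, `β'` in the same orbit: the unique `n` with `0 ≤ n < |𝔹_𝔭|` and `σ^n β = β'`. -/
def steps0 (σ : Equiv.Perm B) (β β' : B) : ℕ := sInf {n : ℕ | (σ ^ n) β = β'}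

/-- `h_β^{β'} = -e_β + p^n e_{β'}` where `β = σ^n β'` with `0 < n ≤ |𝔹_𝔭|`. -/
def hvec (σ : Equiv.Perm B) (p : ℕ) (β β' : B) : B → ℚ :=
  -(e β) + ((p : ℚ) ^ steps σ β' β) • e β'

/-- `b_β^{β'} = e_β + p^n e_{β'}` where `β = σ^n β'` with `0 < n ≤ |𝔹_𝔭|`. -/
def bvec (σ : Equiv.Perm B) (p : ℕ) (β β' : B) : B → ℚ :=
  (e β) + ((p : ℚ) ^ steps σ β' β) • e β'

/-- `h_β = -e_β + p e_{σ⁻¹ β}`. -/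
def hsimple (σ : Equiv.Perm B) (p : ℕ) (β : B) : B → ℚ := -(e β) + (p : ℚ) • e (σ⁻¹ β)

/-- `b_β = e_β + p e_{σ⁻¹ β}`. -/
def bsimple (σ : Equiv.Perm B) (p : ℕ) (β : B) : B → ℚ := (e β) + (p : ℚ) • e (σ⁻¹ β)

/-- The `ℚ^{≥0}`-cone generated by a set `S` of vectors: all finite nonnegative rational
linear combinations of elements of `S`. -/
def cone {V : Type*} [AddCommMonoid V] [Module ℚ V] (S : Set V) : Set V :=
  {x | ∃ (n : ℕ) (c : Fin n → ℚ) (v : Fin n → V),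
    (∀ i, 0 ≤ c i) ∧ (∀ i, v i ∈ S) ∧ x = ∑ i, c i • v i}

/-- A chain in `T` (automatically contained in a single orbit, so this is the notion of a
chain in `T_𝔭` for `T_𝔭 ⊊ 𝔹_𝔭`): `C = {σ^{-i}β : 0 ≤ i ≤ m} ⊆ T` with `σβ ∉ T` and
`σ^{-m-1}β ∉ T`. -/
def IsChainIn (σ : Equiv.Perm B) (T : Set B) (C : Set B) : Prop :=
  ∃ (β : B) (m : ℕ), σ β ∉ T ∧ (σ⁻¹ ^ (m + 1)) β ∉ T ∧
    (∀ i ≤ m, (σ⁻¹ ^ i) β ∈ T) ∧ C = {τ | ∃ i ≤ m, τ = (σ⁻¹ ^ i) β}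

/-- `C̃` for a chain `C`: equals `C` if `m` is odd (i.e. `|C| = m+1` is even), and
`C ∪ {σ^{-m-1}β} = C ∪ σ⁻¹(C)` if `m` is even (i.e. `|C|` odd). -/
def chainExt (σ : Equiv.Perm B) (C : Set B) : Set B :=
  if Odd C.ncard then C ∪ (⇑σ⁻¹ '' C) else C

/-- `T̃ = ⋃_𝔭 T̃_𝔭`: the union of `T` with the extensions `C̃` of all chains `C` in `T`.
(For orbits with `T_𝔭 = 𝔹_𝔭` there are no chains and `T̃_𝔭 = 𝔹_𝔭 = T_𝔭`.) -/
def tilde (σ : Equiv.Perm B) (T : Set B) : Set B :=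
  T ∪ ⋃ (C : Set B) (_ : IsChainIn σ T C), chainExt σ C

/-- `μ_β`: the least `i > 0` with `σ^i β ∉ T` if `T_𝔭 ≠ 𝔹_𝔭`, and `0` if `T_𝔭 = 𝔹_𝔭`. -/
def mu (σ : Equiv.Perm B) (T : Set B) (β : B) : ℕ :=
  if orbit σ β ⊆ T then 0 else sInf {i : ℕ | 0 < i ∧ (σ ^ i) β ∉ T}

/-- `n_β`: the least `i > 0` with `σ^i β ∉ T̃` (meaningful when `T̃_𝔭 ≠ 𝔹_𝔭`). -/
def nn (σ : Equiv.Perm B) (T : Set B) (β : B) : ℕ :=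
  sInf {i : ℕ | 0 < i ∧ (σ ^ i) β ∉ tilde σ T}

/-- `ν_β`: the least `i ≥ 0` with `σ^{-i} β ∉ T` (meaningful when `T_𝔭 ≠ 𝔹_𝔭`). -/
def nu (σ : Equiv.Perm B) (T : Set B) (β : B) : ℕ :=
  sInf {i : ℕ | (σ⁻¹ ^ i) β ∉ T}

/-- `𝒯(T_𝔭) = (𝔹_𝔭 − T̃_𝔭) ∪ σ(T̃_𝔭 − T_𝔭)`, taken globally (union over all `𝔭`). -/
def Tscr (σ : Equiv.Perm B) (T : Set B) : Set B :=
  (tilde σ T)ᶜ ∪ (⇑σ '' (tilde σ T \ T))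

/-- The generating set `⋃_𝔭 𝒢(T_𝔭)`:
`{h_β^{β'} : β ∈ ℋ(T_𝔭), β' ∈ 𝒯(T_𝔭)} ∪ {±b_β : β ∈ T_𝔭}` over all `𝔭`. -/
def Dgen (σ : Equiv.Perm B) (p : ℕ) (T : Set B) : Set (B → ℚ) :=
  {v | ∃ β β', β ∉ T ∧ β' ∈ Tscr σ T ∧ sameOrbit σ β β' ∧ v = hvec σ p β β'}
  ∪ {v | ∃ β ∈ T, v = bsimple σ p β ∨ v = -(bsimple σ p β)}

/-- The cone `𝒟_T`. -/
def D (σ : Equiv.Perm B) (p : ℕ) (T : Set B) : Set (B → ℚ) := cone (Dgen σ p T)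

/-- `h_{σ^{n_β}β}^{β} = -e_{σ^{n_β}β} + p^{n_β} e_β`. -/
def fH (σ : Equiv.Perm B) (p : ℕ) (T : Set B) (β : B) : B → ℚ :=
  -(e ((σ ^ nn σ T β) β)) + ((p : ℚ) ^ nn σ T β) • e β

/-- `b_{σ^{n_β}β}^{β} = e_{σ^{n_β}β} + p^{n_β} e_β`. -/
def fB (σ : Equiv.Perm B) (p : ℕ) (T : Set B) (β : B) : B → ℚ :=
  (e ((σ ^ nn σ T β) β)) + ((p : ℚ) ^ nn σ T β) • e β

/-- The generating set `⋃_𝔭 𝒢′(T_𝔭)`: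
if `𝔹_𝔭 − T̃_𝔭 ≠ ∅` it is `{h_{σ^{n_β}β}^β : β ∈ 𝔹_𝔭 − T̃_𝔭} ∪ {−b_{σ^{n_β}β}^β : β ∈ T̃_𝔭 − T_𝔭}
∪ {±b_β : β ∈ T_𝔭}`, and if `𝔹_𝔭 = T̃_𝔭` it is `{−e_β : β ∈ 𝔹_𝔭 − T_𝔭} ∪ {±b_β : β ∈ T_𝔭}`. -/
def D'gen (σ : Equiv.Perm B) (p : ℕ) (T : Set B) : Set (B → ℚ) :=
  {v | ∃ β, β ∉ tilde σ T ∧ v = fH σ p T β}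
  ∪ {v | ∃ β, β ∈ tilde σ T ∧ β ∉ T ∧ ¬ orbit σ β ⊆ tilde σ T ∧ v = -(fB σ p T β)}
  ∪ {v | ∃ β, β ∉ T ∧ orbit σ β ⊆ tilde σ T ∧ v = -(e β)}
  ∪ {v | ∃ β ∈ T, v = bsimple σ p β ∨ v = -(bsimple σ p β)}

/-- The cone `𝒟′_T`. -/
def D' (σ : Equiv.Perm B) (p : ℕ) (T : Set B) : Set (B → ℚ) := cone (D'gen σ p T)

/-- `f_β(T)` for `β ∉ T`: `h_{σ^{n_β}β}^β` if `β ∈ 𝔹_𝔭 − T̃_𝔭`; `−b_{σ^{n_β}β}^β` if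
`β ∈ T̃_𝔭 − T_𝔭` and `𝔹_𝔭 ≠ T̃_𝔭`; and `−(1+p^{|𝔹_𝔭|}) e_β` if `𝔹_𝔭 = T̃_𝔭`. -/
def fvec (σ : Equiv.Perm B) (p : ℕ) (T : Set B) (β : B) : B → ℚ :=
  if orbit σ β ⊆ tilde σ T then -((1 + (p : ℚ) ^ orbitCard σ β) • e β)
  else if β ∈ tilde σ T then -(fB σ p T β) else fH σ p T β

/-- `𝔹(T) = ⋃_𝔭 𝔹_𝔭(T)`: `β ∈ 𝔹(T)` iff `β ∉ T`, the set `𝔹_𝔭 − T̃_𝔭` is nonempty, and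
`𝔹_𝔭 − T̃_𝔭 ≠ {β}` (this encodes all three cases of the definition of `𝔹_𝔭(T)`). -/
def BT (σ : Equiv.Perm B) (T : Set B) : Set B :=
  {β | β ∉ T ∧ (orbit σ β \ tilde σ T).Nonempty ∧ orbit σ β \ tilde σ T ≠ {β}}

/-- The sign function `ε_T : 𝔹 → {−1,0,1}`. -/
def epsT (σ : Equiv.Perm B) (T : Set B) (β : B) : ℚ :=
  if orbit σ β ⊆ T then 0
  else if β ∈ tilde σ T then (-1 : ℚ) ^ (mu σ T β - 1) else 1

/-- `L^ε[β, β'](κ) = Σ_{0 ≤ i ≤ n} ε(σ^iβ) p^i k_{σ^iβ}`, where `β' = σ^n β` with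
`0 ≤ n < |𝔹_𝔭|`. -/
def Lfun (σ : Equiv.Perm B) (p : ℕ) (ε : B → ℚ) (β β' : B) (κ : B → ℚ) : ℚ :=
  ∑ i ∈ Finset.range (steps0 σ β β' + 1), ε ((σ ^ i) β) * (p : ℚ) ^ i * κ ((σ ^ i) β)

/-- `L^ε[β] = L^ε[β, σ⁻¹β]`. -/
def Lfun1 (σ : Equiv.Perm B) (p : ℕ) (ε : B → ℚ) (β : B) (κ : B → ℚ) : ℚ :=
  Lfun σ p ε β (σ⁻¹ β) κ

/-- `L_{T,β}` for `β ∈ 𝔹 − T`: `L^{ε_T}[σ^{μ_β}β]` if `β ∈ 𝔹 − T̃`, and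
`L^{ε_T}[β, σ^{μ_β−1}β]` if `β ∈ T̃ − T`. -/
def LT (σ : Equiv.Perm B) (p : ℕ) (T : Set B) (β : B) (κ : B → ℚ) : ℚ :=
  if β ∈ tilde σ T then Lfun σ p (epsT σ T) β ((σ ^ (mu σ T β - 1)) β) κ
  else Lfun1 σ p (epsT σ T) ((σ ^ mu σ T β) β) κ

/-- `ε_{T,f_β}`: negates `ε_T` on `{β, σβ, …, σ^{μ_β−1}β}`. -/
def epsTf (σ : Equiv.Perm B) (T : Set B) (β τ : B) : ℚ :=
  if ∃ i < mu σ T β, τ = (σ ^ i) β then -(epsT σ T τ) else epsT σ T τ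

/-- `L_{T,f_β,τ}` for `β ∈ 𝔹(T)` and `τ ∈ 𝔹 − (T ∪ {σ^{n_β}β})`, with `β′ = σ^{n_β}β` and
`β̃ = σ^{μ_{β′}}β′`. -/
def LTf (σ : Equiv.Perm B) (p : ℕ) (T : Set B) (β τ : B) (κ : B → ℚ) : ℚ :=
  if τ = β then
    (if β ∈ tilde σ T then
      Lfun1 σ p (epsTf σ T β) ((σ ^ mu σ T ((σ ^ nn σ T β) β)) ((σ ^ nn σ T β) β)) κ
    else
      Lfun σ p (epsTf σ T β) β (σ⁻¹ ((σ ^ mu σ T ((σ ^ nn σ T β) β)) ((σ ^ nn σ T β) β))) κ)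
  else
    (if τ ∈ tilde σ T then LT σ p T τ κ
     else Lfun1 σ p (epsTf σ T β) ((σ ^ mu σ T τ) τ) κ)

/-- `𝒟_{T,f_β} = {κ : L_{T,f_β,τ}(κ) ≥ 0 for all τ ∈ 𝔹 − (T ∪ {σ^{n_β}β})}`. -/
def Df (σ : Equiv.Perm B) (p : ℕ) (T : Set B) (β : B) : Set (B → ℚ) :=
  {κ | ∀ τ, τ ∉ T → τ ≠ (σ ^ nn σ T β) β → 0 ≤ LTf σ p T β τ κ}

/-- `i_T : ℚ^𝔹 → ℚ^{𝔹−T}`, the linear map with `i_T(e_β) = 0` if `T_𝔭 = 𝔹_𝔭` and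
`i_T(e_β) = (−p)^{ν_β} e_{σ^{−ν_β}β}` otherwise. -/
def iT (σ : Equiv.Perm B) (p : ℕ) (T : Set B) (κ : B → ℚ) : {β : B // β ∉ T} → ℚ :=
  fun β₀ => ∑ β : B, κ β *
    (if orbit σ β ⊆ T then 0
     else if (σ⁻¹ ^ nu σ T β) β = β₀.1 then (-(p : ℚ)) ^ nu σ T β else 0)

/-- Restriction to `ℚ^{𝔹−T}` of a vector of `ℚ^𝔹` (used for vectors supported on `𝔹 − T`). -/
def res (T : Set B) (v : B → ℚ) : {β : B // β ∉ T} → ℚ := fun β => v β.1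

/-- The generating set `𝒢^{T-red}(T) = ⋃_𝔭 𝒢_𝔭^{T-red}(T)` of the reduced cone. -/
def Gred (σ : Equiv.Perm B) (p : ℕ) (T : Set B) : Set ({β : B // β ∉ T} → ℚ) :=
  {v | ∃ β, β ∉ tilde σ T ∧ v = res T (fH σ p T β)}
  ∪ {v | ∃ β, β ∈ tilde σ T ∧ β ∉ T ∧ ¬ orbit σ β ⊆ tilde σ T ∧ v = res T (-(fB σ p T β))}
  ∪ {v | ∃ β, β ∉ T ∧ orbit σ β ⊆ tilde σ T ∧ v = res T (-(e β))}

/-- The minimal cone `𝒞^min_T = i_T(𝒟_T ∩ ⋂_{β ∈ 𝔹(T)} 𝒟_{T,f_β}) ⊆ ℚ^{𝔹−T}`. -/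
def Cmin (σ : Equiv.Perm B) (p : ℕ) (T : Set B) : Set ({β : B // β ∉ T} → ℚ) :=
  iT σ p T '' (D σ p T ∩ {κ | ∀ β ∈ BT σ T, κ ∈ Df σ p T β})

/-- `g_β`: `b_β` if `β ∈ T_𝔭`; `−e_β` if `β ∈ T̃_𝔭 − T_𝔭` and `𝔹_𝔭 = T̃_𝔭`;
`−b_{σ^{n_β}β}^β` if `β ∈ T̃_𝔭 − T_𝔭` and `𝔹_𝔭 ≠ T̃_𝔭`; `h_{σ^{n_β}β}^β` if `β ∈ 𝔹_𝔭 − T̃_𝔭`. -/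
def gvec (σ : Equiv.Perm B) (p : ℕ) (T : Set B) (β : B) : B → ℚ :=
  if β ∈ T then bsimple σ p β
  else if orbit σ β ⊆ tilde σ T then -(e β)
  else if β ∈ tilde σ T then -(fB σ p T β)
  else fH σ p T β

/-- The map `σ̄ : β ↦ σ^{n_β} β`. -/
def sigbar (σ : Equiv.Perm B) (T : Set B) (β : B) : B := (σ ^ nn σ T β) β

/-- `h_β = -e_β + p e_{σ⁻¹β}` as an element of `ℤ^𝔹`. -/
def hZ (σ : Equiv.Perm B) (p : ℕ) (β : B) : B → ℤ :=
  fun τ => (if τ = β then -1 else 0) + (if τ = σ⁻¹ β then (p : ℤ) else 0)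

end GO

end

namespace GO

lemma sub_neg_pow_ne (p : ℕ) (hp : p.Prime) (N : ℕ) (hN : 0 < N) :
    (1 : ℚ) - (-(p : ℚ)) ^ N ≠ 0 := by
  intro h
  have h1 : (-(p : ℚ)) ^ N = 1 := by linarith
  have h2 : |(-(p : ℚ)) ^ N| = 1 := by rw [h1]; simp
  rw [abs_pow, abs_neg, Nat.abs_cast] at h2
  have h3 : p ^ N = 1 := by exact_mod_cast h2
  have := Nat.one_lt_pow hN.ne' hp.one_lt
  omega

lemma iT_add {B : Type*} [Fintype B] [DecidableEq B] (σ : Equiv.Perm B) (p : ℕ) (T : Set B)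
    (x y : B → ℚ) : iT σ p T (x + y) = iT σ p T x + iT σ p T y := by
  funext b
  simp only [iT, Pi.add_apply, add_mul, Finset.sum_add_distrib]

lemma iT_smul {B : Type*} [Fintype B] [DecidableEq B] (σ : Equiv.Perm B) (p : ℕ) (T : Set B)
    (a : ℚ) (x : B → ℚ) : iT σ p T (a • x) = a • iT σ p T x := by
  funext b
  simp only [iT, Pi.smul_apply, smul_eq_mul, Finset.mul_sum, mul_assoc]

lemma iT_e {B : Type*} [Fintype B] [DecidableEq B] (σ : Equiv.Perm B) (p : ℕ) (T : Set B)
    (β : B) (β₀ : {β : B // β ∉ T}) : iT σ p T (e β) β₀ =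
    (if orbit σ β ⊆ T then 0
     else if (σ⁻¹ ^ nu σ T β) β = β₀.1 then (-(p : ℚ)) ^ nu σ T β else 0) := by
  simp only [iT, e, ite_mul, one_mul, zero_mul, Finset.sum_ite_eq', Finset.mem_univ, if_true]

lemma pow_eq_inv_pow {B : Type*} [Fintype B] (σ : Equiv.Perm B) (n : ℕ) :
    ∃ m : ℕ, σ ^ n = σ⁻¹ ^ m := by
  have h : σ ^ n ∈ Submonoid.powers σ⁻¹ := by
    rw [mem_powers_iff_mem_zpowers, Subgroup.zpowers_inv]
    exact ⟨n, by simp⟩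
  obtain ⟨m, hm⟩ := h
  exact ⟨m, hm.symm⟩

lemma orbit_sub_iff {B : Type*} [Fintype B] (σ : Equiv.Perm B) (T : Set B)
    (β : B) : orbit σ β ⊆ T ↔ ∀ m : ℕ, (σ⁻¹ ^ m) β ∈ T := by
  constructor
  · intro h m
    obtain ⟨n, hn⟩ := pow_eq_inv_pow σ⁻¹ m
    rw [inv_inv] at hn
    rw [hn]
    exact h ⟨n, rfl⟩
  · rintro h _ ⟨n, rfl⟩
    obtain ⟨m, hm⟩ := pow_eq_inv_pow σ n
    rw [hm]
    exact h m

lemma nu_spec {B : Type*} [Fintype B] (σ : Equiv.Perm B) (T : Set B)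
    (β : B) (h : ¬ orbit σ β ⊆ T) : (σ⁻¹ ^ nu σ T β) β ∉ T := by
  rw [orbit_sub_iff] at h
  push Not at h
  exact Nat.sInf_mem (s := {i : ℕ | (σ⁻¹ ^ i) β ∉ T}) h

lemma nu_lt {B : Type*} (σ : Equiv.Perm B) (T : Set B)
    (β : B) (i : ℕ) (h : i < nu σ T β) : (σ⁻¹ ^ i) β ∈ T := by
  by_contra hc
  exact Nat.notMem_of_lt_sInf h hc

lemma nu_succ {B : Type*} [Fintype B] (σ : Equiv.Perm B) (T : Set B)
    (β : B) (hβ : β ∈ T) (h : ¬ orbit σ (σ⁻¹ β) ⊆ T) : nu σ T β = nu σ T (σ⁻¹ β) + 1 := by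
  have h1 := nu_spec σ T _ h
  apply le_antisymm
  · apply Nat.sInf_le
    simpa only [Set.mem_ofPred_eq, pow_succ, Equiv.Perm.mul_apply] using h1
  · by_contra hc
    have h3 : ¬ orbit σ β ⊆ T := by
      rw [orbit_sub_iff]
      intro h4
      apply h1
      have := h4 (nu σ T (σ⁻¹ β) + 1)
      simpa only [pow_succ, Equiv.Perm.mul_apply] using this
    have h2 := nu_spec σ T β h3
    rcases hk : nu σ T β with _ | k
    · rw [hk] at h2
      exact h2 (by simpa using hβ)
    · rw [hk, pow_succ, Equiv.Perm.mul_apply] at h2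
      exact h2 (nu_lt σ T _ k (by omega))

lemma iT_b {B : Type*} [Fintype B] [DecidableEq B] (σ : Equiv.Perm B) (p : ℕ) (T : Set B)
    (β : B) (hβ : β ∈ T) : iT σ p T (bsimple σ p β) = 0 := by
  funext β₀
  rw [bsimple, iT_add, iT_smul, Pi.add_apply, Pi.smul_apply, iT_e, iT_e]
  have hiff : orbit σ β ⊆ T ↔ orbit σ (σ⁻¹ β) ⊆ T := by
    rw [orbit_sub_iff, orbit_sub_iff]
    constructor
    · intro h m
      have := h (m + 1)
      rwa [pow_succ, Equiv.Perm.mul_apply] at this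
    · intro h m
      rcases m with _ | m
      · simpa using hβ
      · rw [pow_succ, Equiv.Perm.mul_apply]
        exact h m
  by_cases h : orbit σ (σ⁻¹ β) ⊆ T
  · rw [if_pos h, if_pos (hiff.2 h)]; simp
  · rw [if_neg h, if_neg (fun h' => h (hiff.1 h')), nu_succ σ T β hβ h,
      pow_succ (σ⁻¹), Equiv.Perm.mul_apply]
    split_ifs
    · simp only [smul_eq_mul, Pi.zero_apply]; ring
    · simp

lemma e_sub_mem {B : Type*} [DecidableEq B] (σ : Equiv.Perm B) (p : ℕ) (T : Set B)
    (β : B) (n : ℕ) (h : ∀ i < n, (σ⁻¹ ^ i) β ∈ T) :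
    e β - (-(p : ℚ)) ^ n • e ((σ⁻¹ ^ n) β) ∈
      Submodule.span ℚ {v : B → ℚ | ∃ β ∈ T, v = bsimple σ p β} := by
  induction n with
  | zero => simp
  | succ n ih =>
    have h1 := ih (fun i hi => h i (by omega))
    have h2 : bsimple σ p ((σ⁻¹ ^ n) β) ∈
        Submodule.span ℚ {v : B → ℚ | ∃ β ∈ T, v = bsimple σ p β} :=
      Submodule.subset_span ⟨_, h n (by omega), rfl⟩
    convert Submodule.add_mem _ h1 (Submodule.smul_mem _ ((-(p : ℚ)) ^ n) h2) using 1
    rw [bsimple, ← Equiv.Perm.mul_apply, ← pow_succ']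
    module

/-- the image of `e_β` as a vector of `ℚ^𝔹`. -/
noncomputable def wv {B : Type*} [DecidableEq B] (σ : Equiv.Perm B) (p : ℕ) (T : Set B) (β : B) : B → ℚ :=
  if orbit σ β ⊆ T then 0 else (-(p : ℚ)) ^ nu σ T β • e ((σ⁻¹ ^ nu σ T β) β)

lemma e_sub_wv_mem {B : Type*} [Fintype B] [DecidableEq B] (σ : Equiv.Perm B) (p : ℕ)
    (hp : p.Prime) (T : Set B) (β : B) :
    e β - wv σ p T β ∈ Submodule.span ℚ {v : B → ℚ | ∃ β ∈ T, v = bsimple σ p β} := by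
  rw [wv]
  split_ifs with h
  · rw [orbit_sub_iff] at h
    have h1 := e_sub_mem σ p T β (orderOf σ) (fun i _ => h i)
    rw [inv_pow, pow_orderOf_eq_one, inv_one, Equiv.Perm.one_apply] at h1
    have h2 := Submodule.smul_mem _ ((1 : ℚ) - (-(p : ℚ)) ^ orderOf σ)⁻¹ h1
    have h3 := sub_neg_pow_ne p hp (orderOf σ) (orderOf_pos σ)
    convert h2 using 1
    rw [show e β - (-(p : ℚ)) ^ orderOf σ • e β = ((1 : ℚ) - (-(p : ℚ)) ^ orderOf σ) • e β by
      module, smul_smul, inv_mul_cancel₀ h3]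
    simp
  · exact e_sub_mem σ p T β _ (fun i hi => nu_lt σ T β i hi)

lemma sum_wv {B : Type*} [Fintype B] [DecidableEq B] (σ : Equiv.Perm B) (p : ℕ)
    (T : Set B) (κ : B → ℚ) (h : iT σ p T κ = 0) : ∑ β, κ β • wv σ p T β = 0 := by
  funext τ
  rw [Finset.sum_apply, Pi.zero_apply]
  by_cases hτ : τ ∈ T
  · apply Finset.sum_eq_zero
    intro β _
    rw [Pi.smul_apply, wv]
    split_ifs with h1
    · simp
    · have h2 : τ ≠ (σ⁻¹ ^ nu σ T β) β := fun h3 => nu_spec σ T β h1 (h3 ▸ hτ)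
      rw [Pi.smul_apply, e, if_neg h2]
      simp
  · have h1 := congrFun h ⟨τ, hτ⟩
    rw [Pi.zero_apply, iT] at h1
    rw [← h1]
    apply Finset.sum_congr rfl
    intro β _
    rw [Pi.smul_apply, wv, smul_eq_mul]
    congr 1
    split_ifs with h1 h2
    · simp
    · rw [Pi.smul_apply, e, if_pos h2.symm]; simp
    · rw [Pi.smul_apply, e, if_neg (fun h3 => h2 h3.symm)]; simp

lemma ker_eq {B : Type*} [Fintype B] [DecidableEq B] (σ : Equiv.Perm B) (p : ℕ)
    (hp : p.Prime) (T : Set B) : {κ : B → ℚ | iT σ p T κ = 0}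
      = (Submodule.span ℚ {v : B → ℚ | ∃ β ∈ T, v = bsimple σ p β} : Set (B → ℚ)) := by
  ext κ
  simp only [Set.mem_ofPred_eq, SetLike.mem_coe]
  constructor
  · intro h
    have h1 : κ = ∑ β, κ β • (e β - wv σ p T β) := by
      simp only [smul_sub, Finset.sum_sub_distrib, sum_wv σ p T κ h, sub_zero]
      funext τ
      simp [e]
    rw [h1]
    exact Submodule.sum_mem _ (fun β _ => Submodule.smul_mem _ _ (e_sub_wv_mem σ p hp T β))
  · intro h
    induction h using Submodule.span_induction with
    | mem x hx => obtain ⟨β, hβ, rfl⟩ := hx; exact iT_b σ p T β hβ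
    | zero => have := iT_smul σ p T 0 0; simpa using this
    | add x y _ _ hx hy => rw [iT_add, hx, hy, add_zero]
    | smul a x _ hx => rw [iT_smul, hx, smul_zero]

lemma lin_indep {B : Type*} [Fintype B] [DecidableEq B] (σ : Equiv.Perm B) (p : ℕ)
    (hp : p.Prime) : LinearIndependent ℚ (fun β : B => bsimple σ p β) := by
  rw [Fintype.linearIndependent_iff]
  intro c hc
  have h1 : ∀ τ, c τ = -(p : ℚ) * c (σ τ) := by
    intro τ
    have h2 := congrFun hc τ
    have h4 : ∀ x, (τ = σ⁻¹ x) ↔ (σ τ = x) := fun x => by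
      rw [Equiv.Perm.eq_inv_iff_eq]
    simp only [Finset.sum_apply, Pi.smul_apply, bsimple, e, Pi.add_apply, smul_eq_mul, mul_add,
      Finset.sum_add_distrib, h4, mul_ite, mul_one, mul_zero, Finset.sum_ite_eq, Finset.mem_univ,
      if_true, Pi.zero_apply] at h2
    linarith
  have h2 : ∀ n : ℕ, ∀ τ, c τ = (-(p : ℚ)) ^ n * c ((σ ^ n) τ) := by
    intro n
    induction n with
    | zero => simp
    | succ n ih =>
      intro τ
      rw [ih τ, h1, pow_succ, pow_succ', Equiv.Perm.mul_apply, mul_assoc]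
  intro τ
  have h3 := h2 (orderOf σ) τ
  rw [pow_orderOf_eq_one, Equiv.Perm.one_apply] at h3
  have h4 := sub_neg_pow_ne p hp (orderOf σ) (orderOf_pos σ)
  have h5 : ((1 : ℚ) - (-(p : ℚ)) ^ orderOf σ) * c τ = 0 := by linarith
  exact (mul_eq_zero.1 h5).resolve_left h4

lemma span_eq_cone {B : Type*} [DecidableEq B] (σ : Equiv.Perm B) (p : ℕ) (T : Set B) :
    (Submodule.span ℚ {v : B → ℚ | ∃ β ∈ T, v = bsimple σ p β} : Set (B → ℚ)) =
    cone {v : B → ℚ | ∃ β ∈ T, v = bsimple σ p β ∨ v = -(bsimple σ p β)} := by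
  ext κ
  rw [SetLike.mem_coe]
  constructor
  · intro h
    rw [Submodule.mem_span_set'] at h
    obtain ⟨n, f, g, rfl⟩ := h
    refine ⟨n, fun i => |f i|, fun i => if 0 ≤ f i then (g i : B → ℚ) else -(g i : B → ℚ),
      fun i => abs_nonneg _, ?_, ?_⟩
    · intro i
      obtain ⟨β, hβ, h⟩ := (g i).2
      refine ⟨β, hβ, ?_⟩
      dsimp only
      rw [h]
      split_ifs
      · exact Or.inl rfl
      · exact Or.inr rfl
    · apply Finset.sum_congr rfl
      intro i _
      dsimp only
      split_ifs with h
      · rw [abs_of_nonneg h]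
      · rw [abs_of_neg (not_le.1 h), neg_smul_neg]
  · rintro ⟨n, c, v, -, hv, rfl⟩
    refine Submodule.sum_mem _ (fun i _ => Submodule.smul_mem _ _ ?_)
    obtain ⟨β, hβ, h | h⟩ := hv i
    · rw [h]; exact Submodule.subset_span ⟨β, hβ, rfl⟩
    · rw [h]; exact Submodule.neg_mem _ (Submodule.subset_span ⟨β, hβ, rfl⟩)

end GO

/-- the kernel of `i_T` equals the `ℚ`-span of `{b_β : β ∈ T}`, the family
`{b_β : β ∈ T}` is linearly independent, and the kernel coincides with the `ℚ^{≥0}`-cone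
generated by `{b_β, −b_β : β ∈ T}`. -/
theorem statement5 {B : Type*} [Fintype B] [DecidableEq B] [Nonempty B]
    (σ : Equiv.Perm B) (p : ℕ) (hp : p.Prime) (T : Set B) :
    {κ : B → ℚ | GO.iT σ p T κ = 0}
      = (Submodule.span ℚ {v : B → ℚ | ∃ β ∈ T, v = GO.bsimple σ p β} : Set (B → ℚ)) ∧
    LinearIndependent ℚ (fun β : T => GO.bsimple σ p (β : B)) ∧
    {κ : B → ℚ | GO.iT σ p T κ = 0}
      = GO.cone {v : B → ℚ | ∃ β ∈ T, v = GO.bsimple σ p β ∨ v = -(GO.bsimple σ p β)} := by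
  refine ⟨GO.ker_eq σ p hp T, ?_, ?_⟩
  · exact (GO.lin_indep σ p hp).comp _ Subtype.val_injective
  · rw [GO.ker_eq σ p hp T]
    exact GO.span_eq_cone σ p T
end

section
/- Let T ⊆ 𝔹 and let 𝔹_𝔭 be an orbit with 𝔹_𝔭 − T̃_𝔭 ≠ ∅. Let β₁ ∈ T̃_𝔭 − T_𝔭 and suppose that β := σ^{μ_{β₁}}β₁ lies in 𝔹_𝔭 − T̃_𝔭. Set T″ = T ∪ {β}. Then 𝒟_{T″} ∩ {κ ∈ ℚ^𝔹 : L_{T,β₁}(κ) ≥ 0} ⊆ 𝒟_T. -/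
/- Setting: `B` is the finite nonempty set 𝔹 equipped with a permutation `σ` (Frobenius),
and `p` is a prime.  Weights live in `ℚ^𝔹 = (B → ℚ)`.  The orbits `𝔹_𝔭` of `σ` are the sets
`orbit σ β`, and for `T ⊆ 𝔹` we have `T_𝔭 = T ∩ orbit σ β`. -/

open scoped Classical

namespace GO

theorem cone_zero {V : Type*} [AddCommMonoid V] [Module ℚ V] (S : Set V) : (0 : V) ∈ cone S :=
  ⟨0, fun _ => 0, fun i => i.elim0, fun i => i.elim0, fun i => i.elim0, by simp⟩

theorem cone_mem {V : Type*} [AddCommMonoid V] [Module ℚ V] {S : Set V} {v : V} (h : v ∈ S) :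
    v ∈ cone S :=
  ⟨1, fun _ => 1, fun _ => v, fun _ => zero_le_one, fun _ => h, by simp⟩

theorem cone_add {V : Type*} [AddCommMonoid V] [Module ℚ V] {S : Set V} {v w : V}
    (hv : v ∈ cone S) (hw : w ∈ cone S) : v + w ∈ cone S := by
  obtain ⟨n, c, f, hc, hf, rfl⟩ := hv
  obtain ⟨m, d, g, hd, hg, rfl⟩ := hw
  refine ⟨n + m, Fin.append c d, Fin.append f g, ?_, ?_, ?_⟩
  · intro i
    refine Fin.addCases (fun i => ?_) (fun i => ?_) i
    · simpa using hc i
    · simpa using hd i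
  · intro i
    refine Fin.addCases (fun i => ?_) (fun i => ?_) i
    · simpa using hf i
    · simpa using hg i
  · rw [Fin.sum_univ_add]; simp

theorem cone_smul {V : Type*} [AddCommMonoid V] [Module ℚ V] {S : Set V} {v : V} {a : ℚ}
    (ha : 0 ≤ a) (hv : v ∈ cone S) : a • v ∈ cone S := by
  obtain ⟨n, c, f, hc, hf, rfl⟩ := hv
  refine ⟨n, fun i => a * c i, f, fun i => mul_nonneg ha (hc i), hf, ?_⟩
  rw [Finset.smul_sum]
  simp [mul_smul]

theorem cone_sum {V : Type*} [AddCommMonoid V] [Module ℚ V] {S : Set V} {n : ℕ} (f : Fin n → V)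
    (hf : ∀ i, f i ∈ cone S) : ∑ i, f i ∈ cone S := by
  induction n with
  | zero => simpa using cone_zero S
  | succ n ih =>
    rw [Fin.sum_univ_succ]
    exact cone_add (hf 0) (ih _ (fun i => hf _))

/-- the odd run condition -/
def P {B : Type*} (σ : Equiv.Perm B) (T : Set B) (τ : B) : Prop :=
  ∃ r, Odd r ∧ (∀ i, 1 ≤ i → i ≤ r → (σ ^ i) τ ∈ T) ∧ (σ ^ (r + 1)) τ ∉ T

variable {B : Type*}

theorem perm_inv_apply (σ : Equiv.Perm B) (x : B) : σ⁻¹ (σ x) = x := by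
  rw [← Equiv.Perm.mul_apply, inv_mul_cancel]; rfl

theorem perm_apply_inv (σ : Equiv.Perm B) (x : B) : σ (σ⁻¹ x) = x := by
  rw [← Equiv.Perm.mul_apply, mul_inv_cancel]; rfl

theorem pow_sub_of (σ : Equiv.Perm B) {i j : ℕ} {a b : B} (h : (σ ^ (i + j)) a = (σ ^ j) b) :
    (σ ^ i) a = b := by
  rw [add_comm, pow_add, Equiv.Perm.mul_apply] at h
  exact (σ ^ j).injective h

theorem inv_pow_pow (σ : Equiv.Perm B) (i j : ℕ) (a : B) :
    (σ⁻¹ ^ j) ((σ ^ (i + j)) a) = (σ ^ i) a := by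
  rw [add_comm, pow_add, Equiv.Perm.mul_apply, inv_pow, perm_inv_apply]

theorem chain_ncard (σ : Equiv.Perm B) (T : Set B) (β : B) (m : ℕ) (h1 : σ β ∉ T)
    (h3 : ∀ i ≤ m, (σ⁻¹ ^ i) β ∈ T) :
    ({τ | ∃ i ≤ m, τ = (σ⁻¹ ^ i) β} : Set B).ncard = m + 1 := by
  have : ({τ | ∃ i ≤ m, τ = (σ⁻¹ ^ i) β} : Set B) =
      (fun i => (σ⁻¹ ^ i) β) '' (Finset.range (m + 1) : Set ℕ) := by
    ext τ; simp only [Set.mem_setOf_eq, Set.mem_image, Finset.coe_range, Set.mem_Iio]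
    constructor
    · rintro ⟨i, hi, rfl⟩; exact ⟨i, by omega, rfl⟩
    · rintro ⟨i, hi, rfl⟩; exact ⟨i, by omega, rfl⟩
  rw [this, Set.ncard_image_of_injOn, Set.ncard_coe_finset, Finset.card_range]
  have key : ∀ i j, i < j → j ≤ m → (σ⁻¹ ^ i) β = (σ⁻¹ ^ j) β → False := by
    intro i j hij hj he
    obtain ⟨d, rfl⟩ : ∃ d, j = (d + 1) + i := ⟨j - i - 1, by omega⟩
    have := pow_sub_of σ⁻¹ he.symm
    apply h1
    have h4 := h3 d (by omega)
    rw [← this, pow_succ', Equiv.Perm.mul_apply, perm_apply_inv]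
    exact h4
  intro i hi j hj he
  simp only [Finset.coe_range, Set.mem_Iio] at hi hj
  rcases lt_trichotomy i j with h | h | h
  · exact (key i j h (by omega) he).elim
  · exact h
  · exact (key j i h (by omega) he.symm).elim

theorem mem_tilde (σ : Equiv.Perm B) (T : Set B) (τ : B) :
    τ ∈ tilde σ T ↔ τ ∈ T ∨ P σ T τ := by
  constructor
  · rintro (h | h)
    · exact Or.inl h
    simp only [Set.mem_iUnion] at h
    obtain ⟨C, ⟨β, m, h1, h2, h3, rfl⟩, h⟩ := h
    unfold chainExt at h
    rw [chain_ncard σ T β m h1 h3] at h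
    split_ifs at h with ho
    · rcases h with ⟨i, hi, rfl⟩ | ⟨c, ⟨i, hi, rfl⟩, rfl⟩
      · exact Or.inl (h3 i hi)
      · rw [← Equiv.Perm.mul_apply, ← pow_succ']
        rcases hi.lt_or_eq with hlt | rfl
        · exact Or.inl (h3 _ hlt)
        · right
          have hz : ∀ j k, (σ ^ j) ((σ⁻¹ ^ (k + j)) β) = (σ⁻¹ ^ k) β := by
            intro j k
            have := inv_pow_pow σ⁻¹ k j β
            simpa using this
          refine ⟨i + 1, ho, ?_, ?_⟩
          · intro j hj hj'
            obtain ⟨k, hk⟩ : ∃ k, i + 1 = k + j := ⟨i + 1 - j, by omega⟩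
            rw [hk, hz]
            exact h3 k (by omega)
          · have := hz (i + 1) 0
            rw [zero_add] at this
            rw [pow_succ' σ, Equiv.Perm.mul_apply, this]
            simpa using h1
    · obtain ⟨i, hi, rfl⟩ := h
      exact Or.inl (h3 i hi)
  · rintro (h | ⟨r, ho, h1, h2⟩)
    · exact Or.inl h
    by_cases hT : τ ∈ T
    · exact Or.inl hT
    right
    simp only [Set.mem_iUnion]
    obtain ⟨m, rfl⟩ : ∃ m, r = m + 1 := ⟨r - 1, by have := ho.pos; omega⟩
    have hz : ∀ i k, (σ⁻¹ ^ i) ((σ ^ (k + i)) τ) = (σ ^ k) τ := fun i k => inv_pow_pow σ k i τ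
    have h1' : σ ((σ ^ (m + 1)) τ) ∉ T := by
      rwa [← Equiv.Perm.mul_apply, ← pow_succ']
    have h3' : ∀ i ≤ m, (σ⁻¹ ^ i) ((σ ^ (m + 1)) τ) ∈ T := by
      intro i hi
      obtain ⟨k, hk⟩ : ∃ k, m + 1 = k + i := ⟨m + 1 - i, by omega⟩
      rw [hk, hz]
      exact h1 k (by omega) (by omega)
    refine ⟨_, ⟨(σ ^ (m + 1)) τ, m, h1', ?_, h3', rfl⟩, ?_⟩
    · have := hz (m + 1) 0
      rw [zero_add] at this
      rw [this]; simpa using hT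
    · unfold chainExt
      rw [chain_ncard σ T _ m h1' h3', if_pos ho]
      right
      refine ⟨σ τ, ⟨m, le_rfl, ?_⟩, by simp⟩
      rw [add_comm m 1, hz]; simp

theorem pow_per [Finite B] (σ : Equiv.Perm B) : ∃ N, 0 < N ∧ σ ^ N = 1 :=
  ⟨orderOf σ, orderOf_pos σ, pow_orderOf_eq_one σ⟩

theorem sameOrbit_symm [Finite B] {σ : Equiv.Perm B} {a b : B} (h : sameOrbit σ a b) :
    sameOrbit σ b a := by
  obtain ⟨n, rfl⟩ := h
  obtain ⟨N, hN, h1⟩ := pow_per σ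
  refine ⟨n * (N - 1), ?_⟩
  rw [← Equiv.Perm.mul_apply, ← pow_add]
  have : n * (N - 1) + n = N * n := by
    obtain ⟨k, rfl⟩ : ∃ k, N = k + 1 := ⟨N - 1, by omega⟩
    simp; ring
  rw [this, pow_mul, h1]; simp

theorem sameOrbit_trans {σ : Equiv.Perm B} {a b c : B} (h : sameOrbit σ a b)
    (h' : sameOrbit σ b c) : sameOrbit σ a c := by
  obtain ⟨n, rfl⟩ := h
  obtain ⟨m, rfl⟩ := h'
  exact ⟨m + n, by rw [pow_add, Equiv.Perm.mul_apply]⟩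

theorem steps_spec [Finite B] {σ : Equiv.Perm B} {a b : B} (h : sameOrbit σ a b) :
    0 < steps σ a b ∧ (σ ^ steps σ a b) a = b := by
  have hne : {n : ℕ | 0 < n ∧ (σ ^ n) a = b}.Nonempty := by
    obtain ⟨n, hn⟩ := h
    obtain ⟨N, hN, h1⟩ := pow_per σ
    exact ⟨n + N, by omega, by rw [pow_add, h1]; simpa using hn⟩
  exact Nat.sInf_mem hne

theorem steps_le {σ : Equiv.Perm B} {a b : B} {n : ℕ} (h0 : 0 < n) (h : (σ ^ n) a = b) :
    steps σ a b ≤ n := Nat.sInf_le ⟨h0, h⟩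

theorem mu_eq {σ : Equiv.Perm B} {T : Set B} {a : B} {n : ℕ} (h0 : 0 < n)
    (h : (σ ^ n) a ∉ T) (h' : ∀ i, 0 < i → i < n → (σ ^ i) a ∈ T) : mu σ T a = n := by
  unfold mu
  rw [if_neg (fun hs => h (hs ⟨n, rfl⟩))]
  apply le_antisymm
  · exact Nat.sInf_le ⟨h0, h⟩
  · by_contra hlt
    have hm := Nat.sInf_mem (s := {i : ℕ | 0 < i ∧ (σ ^ i) a ∉ T}) ⟨n, h0, h⟩
    exact hm.2 (h' _ hm.1 (by omega))

/-- basic data of the situation -/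
structure Sit (σ : Equiv.Perm B) (T : Set B) (b : B) (M : ℕ) : Prop where
  even : Even M
  pos : 0 < M
  mem : ∀ i, 0 < i → i < M → (σ ^ i) b ∈ T
  nb : b ∉ T
  nM : (σ ^ M) b ∉ T
  nP : ¬ P σ T ((σ ^ M) b)
  ne : (σ ^ M) b ≠ b

theorem Sit.ne' {σ : Equiv.Perm B} {T : Set B} {b : B} {M : ℕ} (S : Sit σ T b M) {i : ℕ}
    (h0 : 0 < i) (h : i ≤ M) : (σ ^ i) b ≠ b := by
  rcases h.lt_or_eq with h | rfl
  · intro he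
    have := S.mem i h0 h
    rw [he] at this
    exact S.nb this
  · exact S.ne

/-- if `σ^i τ = σ^M b` and the `σ^j τ` avoid `b` for `0<j<i` and `τ` not in the run, `τ = b`. -/
theorem Sit.back {σ : Equiv.Perm B} {T : Set B} {b : B} {M : ℕ} (S : Sit σ T b M) {i : ℕ} {τ : B}
    (hi : 0 < i) (hτ : τ ∉ T) (h : (σ ^ i) τ = (σ ^ M) b)
    (hb : ∀ j, 0 < j → j < i → (σ ^ j) τ ≠ b) : τ = b := by
  rcases lt_trichotomy i M with hl | rfl | hl
  · obtain ⟨k, rfl⟩ : ∃ k, M = k + i := ⟨M - i, by omega⟩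
    have := pow_sub_of σ h.symm
    exact absurd (this ▸ S.mem k (by omega) (by omega)) hτ
  · exact (σ ^ i).injective h
  · obtain ⟨k, rfl⟩ : ∃ k, i = k + M := ⟨i - M, by omega⟩
    have := pow_sub_of σ h
    exact absurd this (hb k (by omega) (by have := S.pos; omega))

theorem Sit.nP'' {σ : Equiv.Perm B} {T : Set B} {b : B} {M : ℕ} (S : Sit σ T b M) :
    ¬ P σ (T ∪ {(σ ^ M) b}) b := by
  rintro ⟨r, ho, h1, h2⟩
  have hb : b ∉ T ∪ {(σ ^ M) b} := by
    rintro (h | h)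
    · exact S.nb h
    · exact S.ne h.symm
  have hr : M < r := by
    by_contra hle
    rcases lt_trichotomy (r + 1) M with h | h | h
    · exact h2 (Or.inl (S.mem _ (by omega) h))
    · exact h2 (Or.inr (by rw [h]; rfl))
    · have : r = M := by omega
      subst this
      exact (Nat.not_even_iff_odd.2 ho) S.even
  apply S.nP
  have hz : ∀ j, (σ ^ j) ((σ ^ M) b) = (σ ^ (j + M)) b := by
    intro j; rw [pow_add, Equiv.Perm.mul_apply]
  refine ⟨r - M, Nat.Odd.sub_even hr.le ho S.even, ?_, ?_⟩
  · intro i hi hi'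
    rw [hz]
    rcases h1 (i + M) (by omega) (by omega) with h | h
    · exact h
    · have := pow_sub_of σ (show _ = _ from h)
      have h5 := h1 i (by omega) (by omega)
      rw [this] at h5
      exact absurd h5 hb
  · rw [hz, show r - M + 1 + M = r + 1 by omega]
    exact fun h => h2 (Or.inl h)

theorem Sit.tscr {σ : Equiv.Perm B} {T : Set B} {b : B} {M : ℕ} (S : Sit σ T b M) {γ : B}
    (h : γ ∈ Tscr σ (T ∪ {(σ ^ M) b})) :
    γ = b ∨ (γ ≠ b ∧ γ ∈ Tscr σ T ∧ ∀ i, 0 < i → i ≤ M → γ ≠ (σ ^ i) b) := by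
  by_cases hγ : γ = b
  · exact Or.inl hγ
  right
  refine ⟨hγ, ?_⟩
  rcases h with h | ⟨τ, ⟨h, hτ⟩, rfl⟩
  · rw [Set.mem_compl_iff, mem_tilde] at h
    push Not at h
    obtain ⟨ha, hP⟩ := h
    have hγT : γ ∉ T := fun h => ha (Or.inl h)
    constructor
    · left
      rw [Set.mem_compl_iff, mem_tilde]
      rintro (h | ⟨r, ho, h1, h2⟩)
      · exact hγT h
      apply hP
      refine ⟨r, ho, fun i hi hi' => Or.inl (h1 i hi hi'), ?_⟩
      rintro (h | h)
      · exact h2 h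
      · refine hγ (S.back (Nat.succ_pos r) hγT h ?_)
        intro j hj hj' he
        exact S.nb (he ▸ h1 j hj (by omega))
    · intro i hi hi' he
      apply ha
      rcases hi'.lt_or_eq with h | rfl
      · exact Or.inl (he ▸ S.mem i hi h)
      · exact Or.inr he
  · have hτT : τ ∉ T := fun h => hτ (Or.inl h)
    rw [mem_tilde] at h
    have hP := h.resolve_left hτ
    have hτb : τ ≠ b := by
      rintro rfl
      exact S.nP'' hP
    constructor
    · right
      refine ⟨τ, ⟨?_, hτT⟩, rfl⟩
      rw [mem_tilde]
      right
      obtain ⟨r, ho, h1, h2⟩ := hP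
      refine ⟨r, ho, ?_, fun h => h2 (Or.inl h)⟩
      intro i hi hi'
      rcases h1 i hi hi' with h | h
      · exact h
      · refine absurd (S.back hi hτT h ?_) hτb
        intro j hj hj' he
        rcases h1 j hj (by omega) with h | h
        · exact S.nb (he ▸ h)
        · exact S.ne ((show _ = _ from h).symm.trans he)
    · intro i hi hi' he
      obtain ⟨k, rfl⟩ : ∃ k, i = k + 1 := ⟨i - 1, by omega⟩
      rw [pow_succ', Equiv.Perm.mul_apply] at he
      have := σ.injective he
      rcases Nat.eq_zero_or_pos k with rfl | hk
      · exact hτb (by simpa using this)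
      · exact hτT (this ▸ S.mem k hk (by omega))

theorem Sit.inj {σ : Equiv.Perm B} {T : Set B} {b : B} {M : ℕ} (S : Sit σ T b M) {i j : ℕ}
    (hi : i ≤ M) (hj : j ≤ M) (h : (σ ^ i) b = (σ ^ j) b) : i = j := by
  rcases lt_trichotomy i j with hl | hl | hl
  · obtain ⟨k, rfl⟩ : ∃ k, j = k + i := ⟨j - i, by omega⟩
    exact absurd (pow_sub_of σ h.symm) (S.ne' (by omega) (by omega))
  · exact hl
  · obtain ⟨k, rfl⟩ : ∃ k, i = k + j := ⟨i - j, by omega⟩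
    exact absurd (pow_sub_of σ h) (S.ne' (by omega) (by omega))

theorem Sit.steps_left [Finite B] {σ : Equiv.Perm B} {T : Set B} {b : B} {M : ℕ}
    (S : Sit σ T b M) {γ : B} (hγ : sameOrbit σ γ b) (hb : γ ≠ b)
    (h : ∀ i, 0 < i → i ≤ M → γ ≠ (σ ^ i) b) :
    steps σ γ ((σ ^ M) b) = steps σ γ b + M := by
  obtain ⟨s0, s1⟩ := steps_spec hγ
  obtain ⟨t0, t1⟩ := steps_spec (sameOrbit_trans hγ ⟨M, rfl⟩ : sameOrbit σ γ ((σ ^ M) b))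
  apply le_antisymm
  · apply steps_le (by omega)
    rw [add_comm, pow_add, Equiv.Perm.mul_apply, s1]
  · generalize steps σ γ ((σ ^ M) b) = n at t0 t1
    rcases le_or_gt n M with hn | hn
    · obtain ⟨k, rfl⟩ : ∃ k, M = k + n := ⟨M - n, by omega⟩
      have := pow_sub_of σ t1.symm
      rcases Nat.eq_zero_or_pos k with rfl | hk
      · exact absurd (by simpa using this.symm) hb
      · exact absurd this.symm (h k hk (by omega))
    · obtain ⟨k, rfl⟩ : ∃ k, n = k + M := ⟨n - M, by omega⟩
      have := steps_le (by omega) (pow_sub_of σ t1)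
      omega

theorem Sit.steps_right [Finite B] {σ : Equiv.Perm B} {T : Set B} {b : B} {M : ℕ}
    (S : Sit σ T b M) {γ : B} (hγ : sameOrbit σ b γ)
    (h : ∀ i, 0 < i → i ≤ M → γ ≠ (σ ^ i) b) :
    steps σ b γ = steps σ ((σ ^ M) b) γ + M := by
  obtain ⟨s0, s1⟩ := steps_spec hγ
  obtain ⟨t0, t1⟩ := steps_spec
    (sameOrbit_trans (sameOrbit_symm ⟨M, rfl⟩) hγ : sameOrbit σ ((σ ^ M) b) γ)
  apply le_antisymm
  · apply steps_le (by omega)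
    rw [pow_add, Equiv.Perm.mul_apply, t1]
  · generalize steps σ b γ = n at s0 s1
    rcases le_or_gt n M with hn | hn
    · exact absurd s1.symm (h n s0 hn)
    · obtain ⟨k, rfl⟩ : ∃ k, n = k + M := ⟨n - M, by omega⟩
      have := steps_le (σ := σ) (a := (σ ^ M) b) (b := γ) (n := k) (by omega)
        (by rw [← s1, pow_add, Equiv.Perm.mul_apply])
      omega

/-- the functional -/
def ell (σ : Equiv.Perm B) (p : ℕ) (b : B) (M : ℕ) : (B → ℚ) →ₗ[ℚ] ℚ :=
  -∑ i ∈ Finset.range M, (-(p : ℚ)) ^ i • (LinearMap.proj ((σ ^ i) b) : (B → ℚ) →ₗ[ℚ] ℚ)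

theorem ell_apply (σ : Equiv.Perm B) (p : ℕ) (b : B) (M : ℕ) (κ : B → ℚ) :
    ell σ p b M κ = -∑ i ∈ Finset.range M, (-(p : ℚ)) ^ i * κ ((σ ^ i) b) := by
  simp [ell]

theorem Sit.LT_eq [Fintype B] [DecidableEq B] {σ : Equiv.Perm B} {T : Set B} {b : B} {M : ℕ}
    (S : Sit σ T b M) (p : ℕ) (hb : b ∈ tilde σ T) (κ : B → ℚ) :
    LT σ p T b κ = ell σ p b M κ := by
  have hmu : mu σ T b = M := mu_eq S.pos S.nM S.mem
  unfold LT Lfun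
  rw [if_pos hb, hmu, ell_apply]
  have hs : steps0 σ b ((σ ^ (M - 1)) b) = M - 1 := by
    unfold steps0
    have hm := Nat.sInf_mem (s := {n : ℕ | (σ ^ n) b = (σ ^ (M - 1)) b}) ⟨M - 1, rfl⟩
    have hle := Nat.sInf_le (s := {n : ℕ | (σ ^ n) b = (σ ^ (M - 1)) b}) (m := M - 1) rfl
    exact S.inj (by omega) (by omega) hm
  rw [hs, show M - 1 + 1 = M by have := S.pos; omega, ← Finset.sum_neg_distrib]
  apply Finset.sum_congr rfl
  intro i hi
  rw [Finset.mem_range] at hi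
  have hz : ∀ j, (σ ^ j) ((σ ^ i) b) = (σ ^ (j + i)) b := by
    intro j; rw [pow_add, Equiv.Perm.mul_apply]
  have hm : mu σ T ((σ ^ i) b) = M - i := by
    apply mu_eq (by omega)
    · rw [hz, show M - i + i = M by omega]; exact S.nM
    · intro j hj hj'
      rw [hz]; exact S.mem _ (by omega) (by omega)
  have ho : ¬ orbit σ ((σ ^ i) b) ⊆ T := by
    intro h
    refine S.nM (h ⟨M - i, ?_⟩)
    rw [hz, show M - i + i = M by omega]
  have ht : (σ ^ i) b ∈ tilde σ T := by
    rcases Nat.eq_zero_or_pos i with rfl | h0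
    · simpa using hb
    · exact Or.inl (S.mem i h0 hi)
  unfold epsT
  rw [if_neg ho, if_pos ht, hm]
  have hsgn : (-1 : ℚ) ^ (M - i - 1) = -(-1) ^ i := by
    have h1 : (-1 : ℚ) ^ (M - i - 1) * (-1) ^ (i + 1) = 1 := by
      rw [← pow_add, show M - i - 1 + (i + 1) = M by omega, S.even.neg_one_pow]
    rcases Nat.even_or_odd i with h | h
    · rw [h.add_one.neg_one_pow] at h1
      rw [h.neg_one_pow]; linarith
    · rw [h.add_one.neg_one_pow] at h1
      rw [h.neg_one_pow]; linarith
  rw [hsgn, neg_pow (p : ℚ)]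
  ring

theorem ell_e_none [DecidableEq B] (σ : Equiv.Perm B) (p : ℕ) (b : B) (M : ℕ) {τ : B}
    (h : ∀ i < M, τ ≠ (σ ^ i) b) : ell σ p b M (e τ) = 0 := by
  rw [ell_apply, neg_eq_zero]
  apply Finset.sum_eq_zero
  intro i hi
  unfold e
  rw [if_neg (fun h' => h i (Finset.mem_range.1 hi) h'.symm), mul_zero]

theorem Sit.ell_e [DecidableEq B] {σ : Equiv.Perm B} {T : Set B} {b : B} {M : ℕ}
    (S : Sit σ T b M) (p : ℕ) {j : ℕ} (hj : j < M) :
    ell σ p b M (e ((σ ^ j) b)) = -(-(p : ℚ)) ^ j := by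
  rw [ell_apply, Finset.sum_eq_single j]
  · simp [e]
  · intro i hi hne
    unfold e
    rw [if_neg (fun h' => hne (S.inj (Finset.mem_range.1 hi).le hj.le h')), mul_zero]
  · intro h; exact absurd (Finset.mem_range.2 hj) h

section main
variable [Fintype B] [DecidableEq B] {σ : Equiv.Perm B} {T : Set B} {b : B} {M : ℕ}

theorem b_mem (σ : Equiv.Perm B) (p : ℕ) (T : Set B) {τ : B} (h : τ ∈ T) (c : ℚ) :
    c • bsimple σ p τ ∈ D σ p T := by
  rcases le_total 0 c with hc | hc
  · exact cone_smul hc (cone_mem (Or.inr ⟨τ, h, Or.inl rfl⟩))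
  · have := cone_smul (a := -c) (by linarith)
      (cone_mem (S := Dgen σ p T) (Or.inr ⟨τ, h, Or.inr rfl⟩))
    simpa [D] using this

theorem Sit.z_mem (S : Sit σ T b M) (p : ℕ) : ∀ i, i < M → ∀ c : ℚ,
    c • (e ((σ ^ i) b) - (-(p : ℚ)) ^ i • e b) ∈ D σ p T := by
  intro i
  induction i with
  | zero => intro _ c; simpa [D] using cone_zero (Dgen σ p T)
  | succ i ih =>
    intro hi c
    have h1 := b_mem σ p T (S.mem (i + 1) (by omega) hi) c
    have h2 := ih (by omega) (-(c * p))
    have h3 := cone_add h1 h2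
    unfold D
    convert h3 using 1
    unfold bsimple
    rw [show σ⁻¹ ((σ ^ (i + 1)) b) = (σ ^ i) b by
      rw [pow_succ', Equiv.Perm.mul_apply, perm_inv_apply]]
    module

theorem Sit.bb (S : Sit σ T b M) (p : ℕ) (c : ℚ) : ∃ z ∈ D σ p T,
    c • bsimple σ p ((σ ^ M) b) = c • e ((σ ^ M) b) - (c * (p : ℚ) ^ M) • e b + z := by
  have hM := S.pos
  refine ⟨_, S.z_mem p (M - 1) (by omega) (c * p), ?_⟩
  unfold bsimple
  rw [show σ⁻¹ ((σ ^ M) b) = (σ ^ (M - 1)) b by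
      obtain ⟨k, rfl⟩ : ∃ k, M = k + 1 := ⟨M - 1, by omega⟩
      rw [pow_succ', Equiv.Perm.mul_apply, perm_inv_apply]; rfl]
  have : (p : ℚ) ^ M = - (p * (-(p : ℚ)) ^ (M - 1)) := by
    rw [← S.even.neg_pow]
    conv_lhs => rw [show M = (M - 1) + 1 by omega, pow_succ]
    ring
  rw [this]
  module

theorem Sit.eM (S : Sit σ T b M) {p : ℕ} (hp : p.Prime) : e ((σ ^ M) b) ∈ D σ p T := by
  have hso : sameOrbit σ ((σ ^ M) b) ((σ ^ M) b) := ⟨0, rfl⟩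
  have h : hvec σ p ((σ ^ M) b) ((σ ^ M) b) ∈ D σ p T := by
    refine cone_mem (Or.inl ⟨_, _, S.nM, Or.inl ?_, hso, rfl⟩)
    rw [Set.mem_compl_iff, mem_tilde]
    rintro (h | h)
    · exact S.nM h
    · exact S.nP h
  have h0 := (steps_spec hso).1
  unfold hvec at h
  generalize steps σ ((σ ^ M) b) ((σ ^ M) b) = s at *
  have h1 : (1 : ℚ) < (p : ℚ) ^ s := one_lt_pow₀ (by exact_mod_cast hp.one_lt) (by omega)
  have h2 := cone_smul (a := ((p : ℚ) ^ s - 1)⁻¹) (inv_nonneg.2 (by linarith)) h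
  have h3 : ((p : ℚ) ^ s - 1) ≠ 0 := by linarith
  unfold D
  convert h2 using 1
  rw [show -(e ((σ ^ M) b)) + (p : ℚ) ^ s • e ((σ ^ M) b) = ((p : ℚ) ^ s - 1) • e ((σ ^ M) b) by
    module, smul_smul, inv_mul_cancel₀ h3, one_smul]

theorem Sit.one_lt (S : Sit σ T b M) : 1 < M := by
  have h1 := S.pos
  obtain ⟨k, hk⟩ := S.even
  omega

theorem Sit.eb (S : Sit σ T b M) {p : ℕ} (hb : b ∈ tilde σ T) :
    -e b ∈ D σ p T := by
  have hso : sameOrbit σ b (σ b) := ⟨1, rfl⟩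
  have h : hvec σ p b (σ b) ∈ D σ p T :=
    cone_mem (Or.inl ⟨_, _, S.nb, Or.inr ⟨b, ⟨hb, S.nb⟩, rfl⟩, hso, rfl⟩)
  unfold hvec at h
  generalize steps σ (σ b) b = s at *
  have h1 : (0 : ℚ) ≤ (p : ℚ) ^ s * p := by positivity
  have hz := S.z_mem p 1 S.one_lt (-(p : ℚ) ^ s)
  have h2 := cone_smul (a := ((p : ℚ) ^ s * p + 1)⁻¹) (inv_nonneg.2 (by linarith)) (cone_add h hz)
  have h3 : ((p : ℚ) ^ s * p + 1) ≠ 0 := by linarith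
  unfold D
  convert h2 using 1
  rw [pow_one, show -(e b) + (p : ℚ) ^ s • e (σ b) +
    -(p : ℚ) ^ s • (e (σ b) - (-(p : ℚ)) ^ 1 • e b) = ((p : ℚ) ^ s * p + 1) • (-e b) by
    module, smul_smul, inv_mul_cancel₀ h3, one_smul]

theorem Sit.b_nonneg (S : Sit σ T b M) {p : ℕ} (hp : p.Prime) (hb : b ∈ tilde σ T) {c : ℚ}
    (hc : 0 ≤ c) : c • bsimple σ p ((σ ^ M) b) ∈ D σ p T := by
  obtain ⟨z, hz, h⟩ := S.bb p c
  rw [h]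
  have h1 := cone_smul hc (S.eM hp)
  have h2 := cone_smul (a := c * (p : ℚ) ^ M) (by positivity) (S.eb (p := p) hb)
  have := cone_add (cone_add h1 h2) hz
  unfold D
  convert this using 1
  module

theorem Sit.ell_bM (S : Sit σ T b M) (p : ℕ) :
    ell σ p b M (bsimple σ p ((σ ^ M) b)) = (p : ℚ) ^ M := by
  have hM := S.pos
  unfold bsimple
  rw [show σ⁻¹ ((σ ^ M) b) = (σ ^ (M - 1)) b by
      obtain ⟨k, rfl⟩ : ∃ k, M = k + 1 := ⟨M - 1, by omega⟩
      rw [pow_succ', Equiv.Perm.mul_apply, perm_inv_apply]; rfl]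
  rw [map_add, map_smul, S.ell_e p (by omega : M - 1 < M), ell_e_none, ← S.even.neg_pow]
  · conv_rhs => rw [show M = (M - 1) + 1 by omega, pow_succ]
    rw [smul_eq_mul]; ring
  · intro i hi h
    have := S.inj le_rfl hi.le h
    omega

theorem Sit.ell_bT (S : Sit σ T b M) (p : ℕ) {τ : B} (h : τ ∈ T) :
    ell σ p b M (bsimple σ p τ) = 0 := by
  unfold bsimple
  by_cases hx : ∃ i, i + 1 < M ∧ τ = (σ ^ (i + 1)) b
  · obtain ⟨i, hi, rfl⟩ := hx
    rw [show σ⁻¹ ((σ ^ (i + 1)) b) = (σ ^ i) b by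
      rw [pow_succ', Equiv.Perm.mul_apply, perm_inv_apply]]
    rw [map_add, map_smul, S.ell_e p hi, S.ell_e p (by omega : i < M), smul_eq_mul]
    ring
  · rw [map_add, map_smul, ell_e_none, ell_e_none, smul_zero, add_zero]
    · intro i hi he
      have : τ = (σ ^ (i + 1)) b := by
        rw [pow_succ', Equiv.Perm.mul_apply, ← he, perm_apply_inv]
      rcases (show i + 1 ≤ M from hi).lt_or_eq with h' | h'
      · exact hx ⟨i, h', this⟩
      · rw [h'] at this
        exact S.nM (this ▸ h)
    · intro i hi he
      rcases Nat.eq_zero_or_pos i with rfl | h0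
      · exact S.nb (by simpa [he] using h)
      · exact hx ⟨i - 1, by omega, by rw [he, show i - 1 + 1 = i by omega]⟩

theorem Sit.gen (S : Sit σ T b M) {p : ℕ} (hp : p.Prime) {v : B → ℚ}
    (hv : v ∈ Dgen σ p (T ∪ {(σ ^ M) b})) :
    v + (-(ell σ p b M v / (p : ℚ) ^ M)) • bsimple σ p ((σ ^ M) b) ∈ D σ p T := by
  have hp0 : (p : ℚ) ≠ 0 := by exact_mod_cast hp.ne_zero
  have hpM : (p : ℚ) ^ M ≠ 0 := pow_ne_zero _ hp0
  have hbT : (σ ^ M) b ∈ Tscr σ T := by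
    left
    rw [Set.mem_compl_iff, mem_tilde]
    rintro (h | h)
    · exact S.nM h
    · exact S.nP h
  rcases hv with ⟨γ, γ', hγ, hγ', hso, rfl⟩ | ⟨τ, hτ, hv⟩
  · have hγT : γ ∉ T := fun h => hγ (Or.inl h)
    have hγx : ∀ i, 0 < i → i ≤ M → γ ≠ (σ ^ i) b := by
      intro i hi hi' he
      rcases hi'.lt_or_eq with h | rfl
      · exact hγT (he ▸ S.mem i hi h)
      · exact hγ (Or.inr he)
    have helb : ell σ p b M (e b) = -1 := by simpa using S.ell_e p S.pos
    have hel : ∀ τ, τ ≠ b → (∀ i, 0 < i → i ≤ M → τ ≠ (σ ^ i) b) → ell σ p b M (e τ) = 0 := by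
      intro τ h h'
      apply ell_e_none
      intro i hi
      rcases Nat.eq_zero_or_pos i with rfl | h0
      · simpa using h
      · exact h' i h0 hi.le
    unfold hvec
    rw [map_add, map_neg, map_smul, smul_eq_mul]
    rcases S.tscr hγ' with rfl | ⟨hne, hTs, hx⟩
    · by_cases hγb : γ = γ'
      · subst hγb
        have h0 := (steps_spec hso).1
        generalize steps σ γ γ = s at *
        rw [helb]
        have h1 : (1 : ℚ) < (p : ℚ) ^ s := one_lt_pow₀ (by exact_mod_cast hp.one_lt) (by omega)
        obtain ⟨z, hz, h⟩ := S.bb p (-((- -1 + (p : ℚ) ^ s * -1) / (p : ℚ) ^ M))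
        rw [h]
        have h2 := cone_smul (a := ((p : ℚ) ^ s - 1) / (p : ℚ) ^ M)
          (div_nonneg (by linarith) (by positivity)) (S.eM hp)
        have h3 := cone_add h2 hz
        unfold D
        convert h3 using 1
        rw [neg_mul, div_mul_cancel₀ _ hpM]
        module
      · rw [helb, hel γ hγb hγx]
        rw [S.steps_right (sameOrbit_symm hso) hγx]
        have hso' : sameOrbit σ γ ((σ ^ M) γ') := sameOrbit_trans hso ⟨M, rfl⟩
        have hh : hvec σ p γ ((σ ^ M) γ') ∈ D σ p T :=
          cone_mem (Or.inl ⟨_, _, hγT, hbT, hso', rfl⟩)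
        unfold hvec at hh
        generalize steps σ ((σ ^ M) γ') γ = s at *
        rw [show (-((-0 + (p : ℚ) ^ (s + M) * -1) / (p : ℚ) ^ M)) = (p : ℚ) ^ s by
          rw [pow_add]; field_simp; ring]
        obtain ⟨z, hz, h⟩ := S.bb p ((p : ℚ) ^ s)
        rw [h]
        have h3 := cone_add hh hz
        unfold D
        convert h3 using 1
        rw [pow_add]
        module
    · rw [hel γ' hne hx]
      by_cases hγb : γ = b
      · subst hγb
        rw [helb]
        have hso' : sameOrbit σ ((σ ^ M) γ) γ' := sameOrbit_trans (sameOrbit_symm ⟨M, rfl⟩) hso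
        have hh : hvec σ p ((σ ^ M) γ) γ' ∈ D σ p T :=
          cone_mem (Or.inl ⟨_, _, S.nM, hTs, hso', rfl⟩)
        unfold hvec at hh
        rw [S.steps_left (sameOrbit_symm hso) hne hx] at hh
        generalize steps σ γ' γ = s at *
        rw [show (-((- -1 + (p : ℚ) ^ s * 0) / (p : ℚ) ^ M)) = -((p : ℚ) ^ M)⁻¹ by
          field_simp; ring]
        obtain ⟨z, hz, h⟩ := S.bb p (-((p : ℚ) ^ M)⁻¹)
        rw [h]
        have h3 := cone_add (cone_smul (a := ((p : ℚ) ^ M)⁻¹) (by positivity) hh) hz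
        unfold D
        convert h3 using 1
        rw [smul_add, smul_smul, pow_add, neg_mul, inv_mul_cancel₀ hpM,
          mul_comm ((p : ℚ) ^ s), inv_mul_cancel_left₀ hpM]
        module
      · rw [hel γ hγb hγx]
        have hh : hvec σ p γ γ' ∈ D σ p T := cone_mem (Or.inl ⟨_, _, hγT, hTs, hso, rfl⟩)
        simpa [hvec] using hh
  · rcases hτ with hτ | hτ
    · rcases hv with rfl | rfl
      · rw [S.ell_bT p hτ]
        simpa using b_mem σ p T hτ 1
      · rw [map_neg, S.ell_bT p hτ]
        simpa using b_mem σ p T hτ (-1)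
    · obtain rfl : τ = (σ ^ M) b := hτ
      rcases hv with rfl | rfl
      · rw [S.ell_bM, div_self hpM]
        unfold D
        convert cone_zero (Dgen σ p T) using 1
        module
      · rw [map_neg, S.ell_bM, neg_div, div_self hpM]
        unfold D
        convert cone_zero (Dgen σ p T) using 1
        module

theorem Sit.main (S : Sit σ T b M) {p : ℕ} (hp : p.Prime) (hb : b ∈ tilde σ T) {κ : B → ℚ}
    (h : κ ∈ D σ p (T ∪ {(σ ^ M) b})) (hL : 0 ≤ ell σ p b M κ) : κ ∈ D σ p T := by
  obtain ⟨n, c, v, hc, hv, rfl⟩ := h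
  have h1 : ∑ i, c i • (v i + (-(ell σ p b M (v i) / (p : ℚ) ^ M)) • bsimple σ p ((σ ^ M) b))
      ∈ D σ p T := cone_sum _ (fun i => cone_smul (hc i) (S.gen hp (hv i)))
  have h2 := S.b_nonneg hp hb (c := ell σ p b M (∑ i, c i • v i) / (p : ℚ) ^ M)
    (div_nonneg hL (by positivity))
  have h3 := cone_add h1 h2
  unfold D
  convert h3 using 1
  simp only [smul_add, Finset.sum_add_distrib, add_assoc, smul_smul]
  rw [← Finset.sum_smul, ← add_smul, map_sum, Finset.sum_div, ← Finset.sum_add_distrib]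
  have h0 : ∀ i ∈ Finset.univ, c i * -((ell σ p b M) (v i) / (p : ℚ) ^ M) +
      (ell σ p b M) (c i • v i) / (p : ℚ) ^ M = 0 := by
    intro i _
    rw [map_smul, smul_eq_mul]
    ring
  rw [Finset.sum_eq_zero h0, zero_smul, add_zero]

end main

end GO

/-- let `β₁ ∈ T̃_𝔭 − T_𝔭` with `β := σ^{μ_{β₁}}β₁ ∈ 𝔹_𝔭 − T̃_𝔭`, and
`T″ = T ∪ {β}`.  Then `𝒟_{T″} ∩ {κ : L_{T,β₁}(κ) ≥ 0} ⊆ 𝒟_T`. -/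
theorem statement8 {B : Type*} [Fintype B] [DecidableEq B] [Nonempty B]
    (σ : Equiv.Perm B) (p : ℕ) (hp : p.Prime) (T : Set B) (β₁ : B)
    (h₁ : β₁ ∈ GO.tilde σ T) (h₂ : β₁ ∉ T)
    (h₃ : (σ ^ GO.mu σ T β₁) β₁ ∉ GO.tilde σ T) :
    GO.D σ p (T ∪ {(σ ^ GO.mu σ T β₁) β₁}) ∩ {κ : B → ℚ | 0 ≤ GO.LT σ p T β₁ κ}
      ⊆ GO.D σ p T := by
  have hP : GO.P σ T β₁ := ((GO.mem_tilde σ T β₁).1 h₁).resolve_left h₂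
  obtain ⟨r, ho, hr, hr'⟩ := hP
  have hmu : GO.mu σ T β₁ = r + 1 :=
    GO.mu_eq (Nat.succ_pos r) hr' (fun i hi hi' => hr i hi (by omega))
  rw [hmu] at h₃ ⊢
  have h₃' := h₃
  rw [GO.mem_tilde] at h₃'
  push Not at h₃'
  have S : GO.Sit σ T β₁ (r + 1) :=
    { even := ho.add_one
      pos := Nat.succ_pos r
      mem := fun i hi hi' => hr i hi (by omega)
      nb := h₂
      nM := hr'
      nP := h₃'.2
      ne := fun h => h₃ (h.symm ▸ h₁) }
  rintro κ ⟨hκ, hL⟩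
  rw [Set.mem_setOf_eq, S.LT_eq p h₁] at hL
  exact S.main hp h₁ hκ hL
end
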